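/- Let n ≥ 1, p ≥ 2, 0 < σ < 1, α > 0 with σp + α ≤ 1, and suppose u : ℝⁿ → ℝ is Hölder continuous of order σp + α with constant M on the ball B_ε(x), for ε ∈ (0,1). Then |∫_{B_ε(x)} |u(x) - u(y)|^{p-2} (u(x) - u(y)) |x - y|^{-(n+σp)} dy| ≤ C(p, n, σ, α, M) ε^{(σp+α)(p-2) + α}. -/

import Mathlib

open MeasureTheory

lemma aux_radial (n : ℕ) (hn : 1 ≤ n) (g ε : ℝ) (hg : 0 < g) (hε : 0 < ε) :
    Set.EqOn (fun y : ℝ => y ^ (n - 1) • (Set.Iio ε).indicator (fun r : ℝ => r ^ (g - n)) y)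
      ((Set.Ioo 0 ε).indicator (fun r : ℝ => r ^ (g - 1))) (Set.Ioi 0) := by
  intro y hy
  have hy' : 0 < y := hy
  by_cases h : y < ε
  · have h1 : y ∈ Set.Iio ε := h
    have h2 : y ∈ Set.Ioo 0 ε := ⟨hy', h⟩
    simp only [Set.indicator_of_mem h1, Set.indicator_of_mem h2, smul_eq_mul]
    rw [← Real.rpow_natCast, ← Real.rpow_add hy', Nat.cast_sub hn]
    congr 1
    push_cast
    ring
  · simp [h]

lemma aux_int (n : ℕ) (hn : 1 ≤ n) (g ε : ℝ) (hg : 0 < g) (hε : 0 < ε)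
    (x : EuclideanSpace ℝ (Fin n)) :
    Integrable (fun y => (Set.Iio ε).indicator (fun r : ℝ => r ^ (g - n)) ‖x - y‖) ∧
    ∫ y, (Set.Iio ε).indicator (fun r : ℝ => r ^ (g - n)) ‖x - y‖ =
      n * (volume : Measure (EuclideanSpace ℝ (Fin n))).real (Metric.ball 0 1) / g * ε ^ g := by
  haveI : Nonempty (Fin n) := ⟨⟨0, hn⟩⟩
  haveI : Nontrivial (EuclideanSpace ℝ (Fin n)) := by
    apply Module.nontrivial_of_finrank_pos (R := ℝ)
    simp
    omega
  have hr := aux_radial n hn g ε hg hε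
  have hii : IntervalIntegrable (fun r : ℝ => r ^ (g - 1)) volume 0 ε :=
    intervalIntegral.intervalIntegrable_rpow' (by linarith)
  have hio : IntegrableOn (fun r : ℝ => r ^ (g - 1)) (Set.Ioo 0 ε) :=
    ((intervalIntegrable_iff_integrableOn_Ioo_of_le hε.le).1 hii)
  constructor
  · have : Integrable (fun y : EuclideanSpace ℝ (Fin n) =>
        (Set.Iio ε).indicator (fun r : ℝ => r ^ (g - n)) ‖y‖) := by
      rw [integrable_fun_norm_addHaar volume, finrank_euclideanSpace_fin,
        integrableOn_congr_fun hr measurableSet_Ioi]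
      exact ((integrable_indicator_iff measurableSet_Ioo).2 hio).integrableOn
    exact this.comp_sub_left x
  · rw [integral_sub_left_eq_self (fun y : EuclideanSpace ℝ (Fin n) =>
        (Set.Iio ε).indicator (fun r : ℝ => r ^ (g - n)) ‖y‖) volume x,
      integral_fun_norm_addHaar volume, finrank_euclideanSpace_fin,
      setIntegral_congr_fun measurableSet_Ioi hr, setIntegral_indicator measurableSet_Ioo]
    have : Set.Ioi (0:ℝ) ∩ Set.Ioo 0 ε = Set.Ioo 0 ε :=
      Set.inter_eq_right.2 (fun y hy => hy.1)
    rw [this, ← integral_Ioc_eq_integral_Ioo, ← intervalIntegral.integral_of_le hε.le,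
      integral_rpow (Or.inl (by linarith))]
    simp [Real.zero_rpow hg.ne']
    ring

/-- For `n ≥ 1`, `p ≥ 2`, `0 < σ < 1`, `α > 0` with `σp + α ≤ 1` and `M > 0`, there is a
constant `C = C(p,n,σ,α,M)` such that for every `ε ∈ (0,1)`, `x ∈ ℝⁿ` and every `u` that is
Hölder of order `σp + α` with constant `M` on `B_ε(x)`,
`|∫_{B_ε(x)} |u(x)-u(y)|^{p-2}(u(x)-u(y)) |x-y|^{-(n+σp)} dy| ≤ C ε^{(σp+α)(p-2)+α}`. -/
theorem stmt11 (n : ℕ) (hn : 1 ≤ n) (σ p α M : ℝ) (hσ0 : 0 < σ) (hσ1 : σ < 1) (hp : 2 ≤ p)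
    (hα : 0 < α) (hle : σ * p + α ≤ 1) (hM : 0 < M) :
    ∃ C : ℝ, 0 < C ∧ ∀ ε : ℝ, 0 < ε → ε < 1 →
      ∀ x : EuclideanSpace ℝ (Fin n), ∀ u : EuclideanSpace ℝ (Fin n) → ℝ,
      (∀ y ∈ Metric.ball x ε, |u x - u y| ≤ M * ‖x - y‖ ^ (σ * p + α)) →
      |∫ y in Metric.ball x ε,
          |u x - u y| ^ (p - 2) * (u x - u y) * ‖x - y‖ ^ (-((n : ℝ) + σ * p))| ≤
        C * ε ^ ((σ * p + α) * (p - 2) + α) := by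
  have hσp : 0 < σ * p := by positivity
  have hp2 : 0 ≤ p - 2 := by linarith
  set g : ℝ := (σ * p + α) * (p - 2) + α with hgdef
  have hg : 0 < g := by positivity
  set V := (volume : Measure (EuclideanSpace ℝ (Fin n))).real (Metric.ball 0 1) with hV
  have hn' : (0 : ℝ) < n := by exact_mod_cast hn
  have hVpos : 0 < V :=
    ENNReal.toReal_pos (Metric.measure_ball_pos _ _ one_pos).ne' measure_ball_lt_top.ne
  refine ⟨M ^ (p - 2) * M * (n * V / g), by positivity, ?_⟩
  intro ε hε _ x u hu
  obtain ⟨h1, h2⟩ := aux_int n hn g ε hg hε x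
  rw [← integral_indicator measurableSet_ball, ← Real.norm_eq_abs]
  refine (norm_integral_le_of_norm_le (h1.const_mul (M ^ (p - 2) * M))
    (Filter.Eventually.of_forall fun y => ?_)).trans ?_
  · by_cases hy : y ∈ Metric.ball x ε
    · have hy' : ‖x - y‖ ∈ Set.Iio ε := by
        rw [Metric.mem_ball, dist_comm, dist_eq_norm] at hy
        exact hy
      rw [Set.indicator_of_mem hy, Set.indicator_of_mem hy']
      by_cases hxy : x = y
      · subst hxy
        simp only [sub_self, mul_zero, zero_mul, norm_zero]
        positivity
      have hd : 0 < ‖x - y‖ := norm_pos_iff.2 (sub_ne_zero.2 hxy)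
      have hb := hu y hy
      set d := ‖x - y‖ with hddef
      rw [norm_mul, norm_mul, Real.norm_of_nonneg (Real.rpow_nonneg (abs_nonneg _) _),
        Real.norm_of_nonneg (Real.rpow_nonneg hd.le _), Real.norm_eq_abs]
      calc |u x - u y| ^ (p - 2) * |u x - u y| * d ^ (-((n : ℝ) + σ * p))
          ≤ (M * d ^ (σ * p + α)) ^ (p - 2) * (M * d ^ (σ * p + α))
              * d ^ (-((n : ℝ) + σ * p)) := by gcongr
        _ = M ^ (p - 2) * M * (d ^ ((σ * p + α) * (p - 2)) * d ^ (σ * p + α)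
              * d ^ (-((n : ℝ) + σ * p))) := by
            rw [Real.mul_rpow hM.le (by positivity), ← Real.rpow_mul hd.le]
            ring
        _ = M ^ (p - 2) * M * d ^ (g - n) := by
            rw [← Real.rpow_add hd, ← Real.rpow_add hd]
            congr 2
            rw [hgdef]
            ring
    · rw [Set.indicator_of_notMem hy, norm_zero]
      refine mul_nonneg (by positivity) (Set.indicator_apply_nonneg fun _ => ?_)
      positivity
  · rw [integral_const_mul, h2]
    exact le_of_eq (by ring)
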